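/- One has lim_{m→∞} Π_m{ n ≤ p_m^2 } = lim_{m→∞} Σ_{n∈Ω_m, n≤p_m^2} π_m(n) = e^{−γ}·(3 − ln 4) ≈ 0.90603; i.e., asymptotically about 90% of the mass of Π_m is carried by the integers in Ω_m not exceeding p_m². -/

import Mathlib

open Filter
open scoped Topology

noncomputable section

/-- The `j`-th prime number, `0`-indexed: `nthPrime 0 = 2`, `nthPrime 1 = 3`, … -/
def nthPrime (j : ℕ) : ℕ := Nat.nth Nat.Prime j

/-- The partition function `Z_m = ∏_{j=1}^m (1 + 1/p_j)`. -/
def Zm (m : ℕ) : ℝ := ∏ j ∈ Finset.range m, (1 + 1 / (nthPrime j : ℝ))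

/-- The element `n = ∏_{j=1}^m p_j^{ν_j}` of `Ω_m` parametrized by `ν ∈ {0,1}^m`. -/
def elt (m : ℕ) (ν : Fin m → Bool) : ℕ := ∏ j : Fin m, if ν j then nthPrime j else 1

/-- The mass `π_m(n) = 1/(Z_m n)`. -/
def mass (m : ℕ) (ν : Fin m → Bool) : ℝ := 1 / (Zm m * (elt m ν : ℝ))

def PS (f : ℕ → ℝ) (N : ℕ) : ℝ := ∑ n ∈ Finset.range (N+1), if n.Prime then f n else 0

lemma PS_mono {f g : ℕ → ℝ} (N : ℕ) (h : ∀ p, p.Prime → p ≤ N → f p ≤ g p) : PS f N ≤ PS g N := by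
  apply Finset.sum_le_sum
  intro n hn
  split_ifs with hp
  · exact h n hp (by simpa [Nat.lt_succ_iff] using hn)
  · exact le_rfl

lemma PS_congr {f g : ℕ → ℝ} (N : ℕ) (h : ∀ p, p.Prime → p ≤ N → f p = g p) : PS f N = PS g N :=
  le_antisymm (PS_mono N fun p hp hN => (h p hp hN).le) (PS_mono N fun p hp hN => (h p hp hN).ge)

lemma PS_add (f g : ℕ → ℝ) (N : ℕ) : PS (fun n => f n + g n) N = PS f N + PS g N := by
  simp only [PS, ← Finset.sum_add_distrib]
  exact Finset.sum_congr rfl fun n _ => by split_ifs <;> simp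

lemma PS_mul (c : ℝ) (f : ℕ → ℝ) (N : ℕ) : PS (fun n => c * f n) N = c * PS f N := by
  simp only [PS, Finset.mul_sum]
  exact Finset.sum_congr rfl fun n _ => by split_ifs <;> simp

lemma log_fact_eq (N : ℕ) :
    Real.log (N.factorial : ℝ) = PS (fun p => (N.factorial.factorization p : ℝ) * Real.log p) N := by
  rw [Real.log_nat_eq_sum_factorization]
  rw [Finsupp.sum_of_support_subset (s := Finset.range (N+1))]
  · apply Finset.sum_congr rfl
    intro p _
    split_ifs with hp
    · rfl
    · simp [Nat.factorization_eq_zero_of_not_prime _ hp]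
  · intro p hp
    simp only [Nat.support_factorization, Nat.mem_primeFactors] at hp
    have := (Nat.Prime.dvd_factorial hp.1).1 hp.2.1
    simp; omega
  · simp

lemma log_fact_lower (N : ℕ) : N * Real.log N - N ≤ Real.log (N.factorial : ℝ) := by
  rcases Nat.eq_zero_or_pos N with rfl | h
  · simp
  have := Stirling.le_log_factorial_stirling h.ne'
  have h1 : 0 ≤ Real.log N := Real.log_natCast_nonneg N
  have h2 : 0 ≤ Real.log (2 * Real.pi) := Real.log_nonneg (by nlinarith [Real.pi_gt_three])
  linarith

lemma log_fact_upper (N : ℕ) : Real.log (N.factorial : ℝ) ≤ N * Real.log N := by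
  rcases Nat.eq_zero_or_pos N with rfl | h
  · simp
  rw [← Real.log_pow]
  apply Real.log_le_log (by positivity)
  exact_mod_cast Nat.factorial_le_pow N

lemma summable_logp : Summable (fun n : ℕ => 4 * (Real.log n / (n:ℝ)^2)) := by
  apply Summable.mul_left
  have h : Summable (fun n : ℕ => 2 * ((n:ℝ) ^ (3/2:ℝ))⁻¹) :=
    (Real.summable_nat_rpow_inv.2 (by norm_num)).mul_left 2
  refine Summable.of_nonneg_of_le (fun n => by have := Real.log_natCast_nonneg n; positivity) ?_ h
  intro n
  rcases Nat.eq_zero_or_pos n with rfl | hn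
  · simp
  have hn' : (0:ℝ) < n := by exact_mod_cast hn
  have h1 := Real.log_le_rpow_div hn'.le (show (0:ℝ) < 1/2 by norm_num)
  have e : (n:ℝ)^(2:ℕ) = (n:ℝ)^(3/2:ℝ) * (n:ℝ)^(1/2:ℝ) := by
    rw [← Real.rpow_add hn', ← Real.rpow_natCast]; norm_num
  rw [e, div_le_iff₀ (by positivity)]
  have : (n:ℝ)^(3/2:ℝ) ≠ 0 := by positivity
  calc Real.log n ≤ _ := h1
    _ = _ := by field_simp

lemma mertens1 : ∃ K, ∀ N : ℕ, 1 ≤ N → |PS (fun n => Real.log n / n) N - Real.log N| ≤ K := by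
  obtain ⟨T, hT⟩ : ∃ T, T = ∑' n : ℕ, 4 * (Real.log n / (n:ℝ)^2) := ⟨_, rfl⟩
  refine ⟨max (Real.log 4) (1 + T), fun N hN => ?_⟩
  have hN' : (0:ℝ) < N := by exact_mod_cast hN
  have hθ : PS (fun p => Real.log p) N ≤ Real.log 4 * N := by
    have := Chebyshev.theta_le_log4_mul_x hN'.le
    rw [Chebyshev.theta_eq_sum_Icc, Nat.floor_natCast, Finset.sum_filter,
      show Finset.Icc 0 N = Finset.range (N+1) by ext; simp [Nat.lt_succ_iff]] at this
    simpa [PS] using this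
  have lo : PS (fun p => N * (Real.log p / p)) N ≤ PS (fun p => (N.factorial.factorization p : ℝ) * Real.log p + Real.log p) N := by
    apply PS_mono
    intro p hp hpN
    have h1 : N / p ≤ N.factorial.factorization p := by
      rw [← hp.pow_dvd_iff_le_factorization (Nat.factorial_ne_zero N)]
      refine dvd_trans ?_ (Nat.factorial_dvd_factorial (Nat.mul_div_le N p))
      have := Nat.factorization_factorial_mul (n := N/p) hp
      rw [hp.pow_dvd_iff_le_factorization (Nat.factorial_ne_zero _), this]
      omega
    have h2 : (N:ℝ) / p ≤ N.factorial.factorization p + 1 := by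
      have hp0 : (0:ℝ) < p := by exact_mod_cast hp.pos
      rw [div_le_iff₀ hp0]
      have := Nat.lt_mul_div_succ N hp.pos
      have h3 : N ≤ (N.factorial.factorization p + 1) * p := by nlinarith
      exact_mod_cast h3
    have := mul_le_mul_of_nonneg_right h2 (Real.log_natCast_nonneg p)
    calc _ = (N:ℝ)/p * Real.log p := by ring
      _ ≤ _ := this
      _ = _ := by ring
  have hi : PS (fun p => (N.factorial.factorization p : ℝ) * Real.log p) N ≤ PS (fun p => N * (Real.log p / p + 4 * (Real.log p / p^2))) N := by
    apply PS_mono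
    intro p hp hpN
    have h1 := Nat.factorization_factorial_le_div_pred hp N
    have hp1 : (2:ℝ) ≤ p := by exact_mod_cast hp.two_le
    have h2 : (N.factorial.factorization p : ℝ) ≤ N / (p - 1) := by
      rw [le_div_iff₀ (by linarith)]
      have := (Nat.le_div_iff_mul_le (by have := hp.two_le; omega)).1 h1
      have h3 : ((N.factorial.factorization p * (p-1) : ℕ) : ℝ) ≤ N := by exact_mod_cast this
      rw [Nat.cast_mul, Nat.cast_sub hp.one_le] at h3
      simpa using h3
    have h4 : (N:ℝ) / (p-1) ≤ N * (1/p + 4 * (1 / p^2)) := by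
      rw [div_le_iff₀ (by linarith), mul_assoc]
      apply le_mul_of_one_le_right hN'.le
      rw [show (1/(p:ℝ) + 4 * (1 / p^2)) * (p-1) = (p+4)*(p-1)/p^2 by field_simp, le_div_iff₀ (by positivity)]
      nlinarith
    calc _ ≤ _ := mul_le_mul_of_nonneg_right (h2.trans h4) (Real.log_natCast_nonneg p)
      _ = _ := by ring
  have hTT : PS (fun p => 4 * (Real.log p / (p:ℝ)^2)) N ≤ T := by
    rw [hT]
    refine le_trans (Finset.sum_le_sum (g := fun n : ℕ => 4 * (Real.log n / (n:ℝ)^2)) ?_) (summable_logp.sum_le_tsum _ ?_)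
    · intro n _
      have := Real.log_natCast_nonneg n
      split_ifs
      · exact le_rfl
      · positivity
    · intro n _
      have := Real.log_natCast_nonneg n
      positivity
  rw [PS_mul, PS_add, ← log_fact_eq] at lo
  rw [PS_mul, PS_add, ← log_fact_eq] at hi
  have a1 := log_fact_lower N
  have a2 := log_fact_upper N
  rw [abs_le]
  constructor
  · have : N * (Real.log N - 1) ≤ N * (PS (fun n => Real.log n / n) N + T) := by
      nlinarith
    have := le_of_mul_le_mul_left this hN'
    linarith [le_max_right (Real.log 4) (1 + T)]
  · have : N * PS (fun n => Real.log n / n) N ≤ N * (Real.log N + Real.log 4) := by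
      nlinarith
    have := le_of_mul_le_mul_left this hN'
    linarith [le_max_left (Real.log 4) (1 + T)]

lemma PS_succ (f : ℕ → ℝ) (N : ℕ) : PS f (N+1) = PS f N + if (N+1).Prime then f (N+1) else 0 := by
  simp [PS, Finset.sum_range_succ]

lemma loglog_diff_summable : Summable (fun i : ℕ =>
    (Real.log ((i+3:ℕ):ℝ) - Real.log ((i+2:ℕ):ℝ)) / Real.log ((i+3:ℕ):ℝ)
      - (Real.log (Real.log ((i+3:ℕ):ℝ)) - Real.log (Real.log ((i+2:ℕ):ℝ)))) := by
  have hs : Summable (fun i : ℕ => 4 * (1 / (((i + 2 : ℕ):ℝ))^2)) :=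
    ((summable_nat_add_iff 2).2 (Real.summable_one_div_nat_pow.2 (by norm_num : 1 < 2))).mul_left 4
  refine Summable.of_norm_bounded hs ?_
  intro i
  set a := Real.log ((i+2:ℕ):ℝ) with ha
  set b := Real.log ((i+3:ℕ):ℝ) with hb
  have h2 : (0:ℝ) < ((i+2:ℕ):ℝ) := by positivity
  have h3 : (0:ℝ) < ((i+3:ℕ):ℝ) := by positivity
  have ha2 : 1/2 ≤ a := by
    have : Real.log 2 ≤ a := Real.log_le_log (by norm_num) (by push_cast; linarith [(Nat.cast_nonneg i : (0:ℝ) ≤ i)])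
    linarith [Real.log_two_gt_d9]
  have hab : a ≤ b := Real.log_le_log h2 (by push_cast; linarith)
  have hba : b - a ≤ 1 / ((i+2:ℕ):ℝ) := by
    rw [ha, hb, ← Real.log_div h3.ne' h2.ne']
    have := Real.log_le_sub_one_of_pos (div_pos h3 h2)
    refine this.trans (le_of_eq ?_)
    push_cast
    have : (i:ℝ)+2 ≠ 0 := by positivity
    field_simp
    ring
  have ha0 : 0 < a := by linarith
  have hb0 : 0 < b := by linarith
  have e : Real.log b - Real.log a = Real.log (b/a) := (Real.log_div hb0.ne' ha0.ne').symm
  have up : Real.log (b/a) ≤ b/a - 1 := Real.log_le_sub_one_of_pos (by positivity)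
  have lo : 1 - a/b ≤ Real.log (b/a) := by
    have := Real.one_sub_inv_le_log_of_pos (show 0 < b/a by positivity)
    simpa using this
  rw [e, Real.norm_eq_abs, abs_le]
  have e1 : (b-a)/b = 1 - a/b := by field_simp
  have e2 : b/a - 1 - (1 - a/b) = (b-a)^2 / (a*b) := by field_simp
  have e3 : (b-a)^2/(a*b) ≤ 4 * (1 / ((i+2:ℕ):ℝ)^2) := by
    rw [div_le_iff₀ (by positivity)]
    have : (b-a)^2 ≤ (1 / ((i+2:ℕ):ℝ))^2 := by
      apply pow_le_pow_left₀ (by linarith) hba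
    rw [one_div_pow] at this
    have h5 : (1:ℝ)/4 ≤ a*b := by nlinarith
    have h6 : (0:ℝ) ≤ 1 / ((i+2:ℕ):ℝ)^2 := by positivity
    nlinarith
  have h6 : (0:ℝ) ≤ 1 / ((i+2:ℕ):ℝ)^2 := by positivity
  constructor <;> linarith

lemma mertens2 : ∃ B, Tendsto (fun N : ℕ => PS (fun n => 1 / (n:ℝ)) N - Real.log (Real.log N)) atTop (𝓝 B) := by
  obtain ⟨K, hK⟩ := mertens1
  set L : ℕ → ℝ := PS (fun n => Real.log n / n) with hL
  set R : ℕ → ℝ := fun n => L n - Real.log n with hR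
  have hc := (Antitone.cauchySeq_series_mul_of_tendsto_zero_of_bounded (b := 2*K)
    (f := fun i : ℕ => 1 / Real.log ((i+3:ℕ):ℝ)) (z := fun i => R (i+3) - R (i+2)) ?_ ?_ ?_)
  · obtain ⟨S1, hS1⟩ := cauchySeq_tendsto_of_complete hc
    have hS2 := loglog_diff_summable.hasSum.tendsto_sum_nat
    have := hS1.add hS2
    refine ⟨_, (tendsto_add_atTop_iff_nat 2).1 ((this.const_add (PS (fun n => 1 / (n:ℝ)) 2 - Real.log (Real.log 2))).congr ?_)⟩
    intro k
    rw [← Finset.sum_add_distrib]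
    induction k with
    | zero => simp
    | succ k ih =>
      rw [Finset.sum_range_succ, ← add_assoc, ih]
      rw [show k + 1 + 2 = (k+2)+1 by ring, PS_succ _ (k+2)]
      simp only [hR, hL, smul_eq_mul]
      rw [show k + 3 = (k+2)+1 by ring, PS_succ _ (k+2)]
      have : Real.log ((k+2+1:ℕ):ℝ) ≠ 0 := by
        apply (Real.log_pos _).ne'
        push_cast; linarith [(Nat.cast_nonneg k : (0:ℝ) ≤ k)]
      have h4 : ((k+2+1:ℕ):ℝ) ≠ 0 := by positivity
      split_ifs
      · field_simp
        ring
      · field_simp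
        ring
  · intro i j hij
    apply one_div_le_one_div_of_le
    · apply Real.log_pos
      push_cast; linarith [(Nat.cast_nonneg i : (0:ℝ) ≤ i)]
    · apply Real.log_le_log (by positivity)
      exact_mod_cast (by omega)
  · simp only [one_div]
    exact tendsto_inv_atTop_zero.comp (Real.tendsto_log_atTop.comp
      (tendsto_natCast_atTop_atTop.comp (tendsto_add_atTop_nat 3)))
  · intro n
    have : ∑ i ∈ Finset.range n, (R (i+3) - R (i+2)) = R (n+2) - R 2 :=
      by simpa using Finset.sum_range_sub (fun i => R (i+2)) n
    rw [this, Real.norm_eq_abs]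
    have h1 := abs_le.1 (hK (n+2) (by omega))
    have h2 := abs_le.1 (hK 2 (by omega))
    simp only [hR]
    rw [abs_le]
    constructor <;> linarith

lemma PS_tendsto {f : ℕ → ℝ} (h : Summable (fun n : ℕ => if n.Prime then f n else 0)) :
    Tendsto (PS f) atTop (𝓝 (∑' n : ℕ, if n.Prime then f n else 0)) :=
  h.hasSum.tendsto_sum_nat.comp (tendsto_add_atTop_nat 1)

/-- elementary bound -/
lemma E_bound {y : ℝ} (h0 : 0 ≤ y) (h1 : y ≤ 1/2) :
    0 ≤ -Real.log (1-y) - y ∧ -Real.log (1-y) - y ≤ 2 * y^2 := by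
  have a := Real.log_le_sub_one_of_pos (show 0 < 1 - y by linarith)
  have b := Real.one_sub_inv_le_log_of_pos (show 0 < 1 - y by linarith)
  refine ⟨by linarith, ?_⟩
  have : (1-y)⁻¹ - 1 - y ≤ 2 * y^2 := by
    rw [show (1-y)⁻¹ - 1 - y = y^2 / (1-y) by field_simp [show 1 - y ≠ 0 by linarith]; ring, div_le_iff₀ (by linarith)]
    nlinarith [sq_nonneg y]
  linarith

lemma prime_inv_le {p : ℕ} (hp : p.Prime) : (0:ℝ) ≤ 1/p ∧ (1:ℝ)/p ≤ 1/2 := by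
  have : (2:ℝ) ≤ p := by exact_mod_cast hp.two_le
  exact ⟨by positivity, one_div_le_one_div_of_le (by norm_num) this⟩

lemma summable_E : Summable (fun n : ℕ => if n.Prime then (-Real.log (1 - 1/(n:ℝ)) - 1/(n:ℝ)) else 0) := by
  have hs : Summable (fun i : ℕ => 2 * (1 / (i:ℝ))^2) := by
    simpa [one_div_pow] using (Real.summable_one_div_nat_pow.2 (by norm_num : 1 < 2)).mul_left 2
  refine Summable.of_norm_bounded hs ?_
  intro n
  split_ifs with h
  · have h1 := prime_inv_le h
    have := E_bound h1.1 h1.2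
    rw [Real.norm_eq_abs, abs_of_nonneg this.1]
    exact this.2
  · simp

def gg (n : ℕ) : ℝ := -Real.log (1 - 1/(n:ℝ))

lemma mertens2' : ∃ B, Tendsto (fun N : ℕ => PS gg N - Real.log (Real.log N)) atTop (𝓝 B) := by
  obtain ⟨B, hB⟩ := mertens2
  refine ⟨_, (hB.add (PS_tendsto summable_E)).congr ?_⟩
  intro N
  have : PS gg N = PS (fun n => 1/(n:ℝ)) N + PS (fun n => -Real.log (1 - 1/(n:ℝ)) - 1/(n:ℝ)) N := by
    rw [← PS_add]; congr 1; ext n; simp [gg]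
  rw [this]; ring

open MeasureTheory Set in
lemma int_log_exp : IntegrableOn (fun v : ℝ => Real.log v * Real.exp (-v)) (Ioi 0) ∧
    ∫ v in Ioi (0:ℝ), Real.log v * Real.exp (-v) = -Real.eulerMascheroniConstant := by
  constructor
  · have h1 := (Real.GammaIntegral_convergent (s := 2) (by norm_num))
    have h2 := (Real.GammaIntegral_convergent (s := 1/2) (by norm_num)).const_mul 2
    have h3 := Integrable.add h1 h2
    refine Integrable.mono' h3 ?_ ?_
    · exact ((Real.measurable_log).mul (by fun_prop)).aestronglyMeasurable
    · rw [ae_restrict_iff' measurableSet_Ioi]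
      refine Eventually.of_forall fun v hv => ?_
      have hv : 0 < v := hv
      have e0 := Real.exp_pos (-v)
      rw [norm_mul, Real.norm_eq_abs, Real.norm_eq_abs, abs_of_pos e0]
      simp only [Pi.add_apply]
      have e1 : v ^ ((2:ℝ)-1) = v := by norm_num
      rw [e1]
      have a1 : Real.log v ≤ v := (Real.log_le_sub_one_of_pos hv).trans (by linarith)
      have a2 : -Real.log v ≤ 2 * v ^ ((1/2:ℝ)-1) := by
        have := Real.log_le_rpow_div (inv_pos.2 hv).le (show (0:ℝ) < 1/2 by norm_num)
        rw [Real.log_inv, Real.inv_rpow hv.le, ← Real.rpow_neg hv.le] at this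
        norm_num at this ⊢
        linarith
      have p1 : 0 ≤ v ^ ((1/2:ℝ)-1) := by positivity
      have : |Real.log v| ≤ v + 2 * v ^ ((1/2:ℝ)-1) := by
        rw [abs_le]; constructor <;> linarith
      nlinarith
  · have h1 := Complex.hasDerivAt_GammaIntegral (s := 1) (by simp)
    have h2 := Complex.hasDerivAt_Gamma_one
    have h3 : Complex.Gamma =ᶠ[𝓝 1] Complex.GammaIntegral := by
      have : {s : ℂ | 0 < s.re} ∈ 𝓝 (1:ℂ) := by
        apply (isOpen_lt continuous_const Complex.continuous_re).mem_nhds; simp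
      filter_upwards [this] with s hs
      exact Complex.Gamma_eq_integral hs
    have h4 := (h1.congr_of_eventuallyEq h3).unique h2
    have h5 : (∫ t : ℝ in Ioi 0, (t:ℂ) ^ ((1:ℂ) - 1) * (Real.log t * Real.exp (-t))) =
        ((∫ v in Ioi (0:ℝ), Real.log v * Real.exp (-v) : ℝ) : ℂ) := by
      rw [← integral_complex_ofReal]
      simp
    rw [h5] at h4
    exact_mod_cast h4

lemma PS_eq_floor (k : ℝ) (v : ℝ) (f : ℕ → ℝ) :
    ∑' n : ℕ, (if n.Prime ∧ Real.log n ≤ k * v then f n else 0) = PS f ⌊Real.exp (k*v)⌋₊ := by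
  rw [tsum_eq_sum (s := Finset.range (⌊Real.exp (k*v)⌋₊ + 1))]
  · apply Finset.sum_congr rfl
    intro n hn
    have hn : n ≤ ⌊Real.exp (k*v)⌋₊ := by simpa [Nat.lt_succ_iff] using hn
    by_cases hp : n.Prime
    · have : Real.log n ≤ k*v := by
        rw [Real.log_le_iff_le_exp (by exact_mod_cast hp.pos)]
        exact (Nat.le_floor_iff (Real.exp_pos _).le).1 hn
      simp [hp, this]
    · simp [hp]
  · intro n hn
    rw [if_neg]
    rintro ⟨hp, h⟩
    apply hn
    rw [Real.log_le_iff_le_exp (by exact_mod_cast hp.pos)] at h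
    have := (Nat.le_floor_iff (Real.exp_pos _).le).2 h
    simp; omega

lemma gg_bound {p : ℕ} (hp : p.Prime) : 0 ≤ gg p ∧ gg p ≤ 2 * (1/p) := by
  have h := prime_inv_le hp
  have := E_bound h.1 h.2
  simp only [gg]
  refine ⟨by linarith, ?_⟩
  nlinarith

lemma gg_summable {k : ℝ} (hk : 0 < k) :
    Summable (fun n : ℕ => if n.Prime then gg n * (n:ℝ)^(-(1/k)) else 0) := by
  have : Summable (fun n : ℕ => 2 * ((n:ℝ) ^ (-(1 + 1/k)))) :=
    (Real.summable_nat_rpow.2 (by have : 0 < 1/k := by positivity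
                                  linarith)).mul_left 2
  refine Summable.of_norm_bounded this ?_
  intro n
  split_ifs with hp
  · have hb := gg_bound hp
    have hn : (0:ℝ) < n := by exact_mod_cast hp.pos
    have h0 : 0 < (n:ℝ)^(-(1/k)) := by positivity
    rw [Real.norm_eq_abs, abs_of_nonneg (mul_nonneg hb.1 h0.le)]
    rw [neg_add, Real.rpow_add hn, Real.rpow_neg_one, ← mul_assoc, ← one_div]
    exact mul_le_mul_of_nonneg_right hb.2 h0.le
  · simp; positivity

open MeasureTheory Set in
lemma laplace {k : ℝ} (hk : 0 < k) :
    ∫ v in Ioi (0:ℝ), PS gg ⌊Real.exp (k*v)⌋₊ * Real.exp (-v) =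
      ∑' n : ℕ, if n.Prime then gg n * (n:ℝ)^(-(1/k)) else 0 := by
  let F : ℕ → ℝ → ℝ := fun n v =>
    (Ici (Real.log n / k)).indicator (fun v => (if n.Prime then gg n else 0) * Real.exp (-v)) v
  have hFi : ∀ n, Integrable (F n) (volume.restrict (Ioi 0)) := by
    intro n
    apply Integrable.indicator _ measurableSet_Ici
    exact (integrableOn_exp_neg_Ioi 0).const_mul _
  have hFint : ∀ n, ∫ v in Ioi (0:ℝ), F n v = if n.Prime then gg n * (n:ℝ)^(-(1/k)) else 0 := by
    intro n
    simp only [F]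
    rw [setIntegral_indicator measurableSet_Ici]
    split_ifs with hp
    · have hn : (0:ℝ) < n := by exact_mod_cast hp.pos
      have hl : 0 < Real.log n := Real.log_pos (by exact_mod_cast hp.one_lt)
      have : Ioi (0:ℝ) ∩ Ici (Real.log n / k) = Ici (Real.log n / k) := by
        apply inter_eq_right.2
        intro x hx
        have hx : Real.log n / k ≤ x := hx
        have : 0 < Real.log n / k := by positivity
        exact lt_of_lt_of_le this hx
      rw [this, integral_Ici_eq_integral_Ioi, integral_const_mul, integral_exp_neg_Ioi,
        Real.rpow_def_of_pos hn]
      congr 2; ring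
    · simp
  have hnn : ∀ n v, 0 ≤ F n v := by
    intro n v
    apply indicator_nonneg
    intro v _
    split_ifs with hp
    · exact mul_nonneg (gg_bound hp).1 (Real.exp_pos _).le
    · simp
  have := hasSum_integral_of_summable_integral_norm hFi ?_
  · rw [funext hFint] at this
    rw [this.tsum_eq]
    congr 1; ext v
    rw [← PS_eq_floor, ← tsum_mul_right]
    apply tsum_congr
    intro n
    simp only [F, indicator, mem_Ici, div_le_iff₀' hk]
    by_cases hp : n.Prime <;> by_cases hl : Real.log n ≤ k * v <;> simp [hp, hl]
  · have e : ∀ n, ∫ v in Ioi (0:ℝ), ‖F n v‖ = if n.Prime then gg n * (n:ℝ)^(-(1/k)) else 0 := by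
      intro n
      rw [← hFint n]
      congr 1; ext v
      exact Real.norm_of_nonneg (hnn n v)
    rw [funext e]
    exact gg_summable hk

lemma loglog_floor {u : ℝ} (hu : 1 ≤ u) :
    |Real.log (Real.log (⌊Real.exp u⌋₊ : ℝ)) - Real.log u| ≤ 1 / (u - Real.log 2) := by
  have l2 := Real.log_two_lt_d9
  have l2' := Real.log_two_gt_d9
  have he : 2 ≤ Real.exp u := by linarith [Real.add_one_le_exp u]
  set N := ⌊Real.exp u⌋₊ with hN
  have h1 : (N:ℝ) ≤ Real.exp u := Nat.floor_le (Real.exp_pos u).le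
  have h2 : Real.exp u < N + 1 := Nat.lt_floor_add_one _
  have h3 : Real.exp u / 2 ≤ N := by linarith
  have hN0 : (0:ℝ) < N := by linarith
  have a1 : Real.log N ≤ u := by
    rw [Real.log_le_iff_le_exp hN0]; exact h1
  have a2 : u - Real.log 2 ≤ Real.log N := by
    have := Real.log_le_log (by positivity) h3
    rwa [Real.log_div (Real.exp_pos u).ne' (by norm_num), Real.log_exp] at this
  have p : 0 < u - Real.log 2 := by linarith
  have b1 : Real.log (Real.log N) ≤ Real.log u := Real.log_le_log (by linarith) a1
  have b2 : Real.log (u - Real.log 2) ≤ Real.log (Real.log N) := Real.log_le_log p a2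
  have b3 : Real.log u - Real.log (u - Real.log 2) ≤ 1 / (u - Real.log 2) := by
    rw [← Real.log_div (by linarith) p.ne']
    refine (Real.log_le_sub_one_of_pos (by positivity)).trans ?_
    rw [div_sub_one p.ne']
    apply div_le_div_of_nonneg_right _ p.le
    linarith
  have : 0 ≤ 1 / (u - Real.log 2) := by positivity
  rw [abs_le]; constructor <;> linarith

def hh (u : ℝ) : ℝ := PS gg ⌊Real.exp u⌋₊ - Real.log u

lemma hh_tendsto {B : ℝ} (hB : Tendsto (fun N : ℕ => PS gg N - Real.log (Real.log N)) atTop (𝓝 B)) :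
    Tendsto hh atTop (𝓝 B) := by
  have h1 : Tendsto (fun u : ℝ => ⌊Real.exp u⌋₊) atTop atTop :=
    tendsto_nat_floor_atTop.comp Real.tendsto_exp_atTop
  have h2 := hB.comp h1
  have h3 : Tendsto (fun u : ℝ => Real.log (Real.log (⌊Real.exp u⌋₊ : ℝ)) - Real.log u) atTop (𝓝 0) := by
    have : Tendsto (fun u : ℝ => 1 / (u - Real.log 2)) atTop (𝓝 0) := by
      simp only [one_div]
      exact tendsto_inv_atTop_zero.comp (tendsto_atTop_add_const_right _ _ tendsto_id)
    refine squeeze_zero_norm' ?_ this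
    filter_upwards [eventually_ge_atTop 1] with u hu
    exact loglog_floor hu
  have := h2.add h3
  rw [add_zero] at this
  refine this.congr fun u => ?_
  simp [hh]

lemma PS_mono_N {f : ℕ → ℝ} (hf : ∀ p, p.Prime → 0 ≤ f p) {M N : ℕ} (h : M ≤ N) : PS f M ≤ PS f N := by
  apply Finset.sum_le_sum_of_subset_of_nonneg
  · intro n; simp; omega
  · intro n _ _
    split_ifs with hp
    · exact hf n hp
    · exact le_rfl

lemma PS_nonneg {f : ℕ → ℝ} (hf : ∀ p, p.Prime → 0 ≤ f p) (N : ℕ) : 0 ≤ PS f N := by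
  apply Finset.sum_nonneg
  intro n _
  split_ifs with hp
  · exact hf n hp
  · exact le_rfl

lemma hh_bound {B : ℝ} (hB : Tendsto (fun N : ℕ => PS gg N - Real.log (Real.log N)) atTop (𝓝 B)) :
    ∃ M, (∀ u, 1 ≤ u → |hh u| ≤ M) ∧ (∀ u, 0 < u → u < 1 → |hh u| ≤ M + |Real.log u|) := by
  obtain ⟨M, hM⟩ := (Metric.isBounded_range_of_tendsto _ hB).exists_norm_le
  have hM' : ∀ N : ℕ, |PS gg N - Real.log (Real.log N)| ≤ M := fun N => hM _ ⟨N, rfl⟩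
  have hM0 : 0 ≤ M := (abs_nonneg _).trans (hM' 0)
  have hg : ∀ p, p.Prime → 0 ≤ gg p := fun p hp => (gg_bound hp).1
  have g2 := PS_nonneg hg 2
  refine ⟨M + 4 + PS gg 2, fun u hu => ?_, fun u h0 h1 => ?_⟩
  · have a := hM' ⌊Real.exp u⌋₊
    have b := loglog_floor hu
    have c : 1 / (u - Real.log 2) ≤ 4 := by
      have l2 := Real.log_two_lt_d9
      rw [div_le_iff₀ (by linarith)]; linarith
    simp only [hh]
    rw [abs_le] at *
    constructor <;> linarith
  · have a : ⌊Real.exp u⌋₊ ≤ 2 := by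
      have : Real.exp u < 3 := (Real.exp_lt_exp.2 h1).trans (Real.exp_one_lt_d9.trans (by norm_num))
      have := (Nat.floor_lt (Real.exp_pos u).le).2 (by exact_mod_cast this : Real.exp u < (3:ℕ))
      omega
    have b := PS_mono_N hg a
    have c := PS_nonneg hg ⌊Real.exp u⌋₊
    have d := neg_abs_le (Real.log u)
    have e := le_abs_self (Real.log u)
    simp only [hh]
    rw [abs_le]; constructor <;> linarith

lemma hh_meas : Measurable hh := by
  apply Measurable.sub _ Real.measurable_log
  exact (measurable_from_nat (f := PS gg)).comp (Nat.measurable_floor.comp Real.measurable_exp)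

open MeasureTheory Set in
lemma hh_lim {B : ℝ} (hB : Tendsto (fun N : ℕ => PS gg N - Real.log (Real.log N)) atTop (𝓝 B)) :
    Tendsto (fun k : ℕ => ∫ v in Ioi (0:ℝ), hh (k * v) * Real.exp (-v)) atTop (𝓝 B) ∧
    ∀ k : ℕ, 1 ≤ k → IntegrableOn (fun v : ℝ => hh (k * v) * Real.exp (-v)) (Ioi 0) := by
  obtain ⟨M, hM1, hM2⟩ := hh_bound hB
  have hmeas : ∀ k : ℕ, AEStronglyMeasurable (fun v : ℝ => hh (k * v) * Real.exp (-v)) (volume.restrict (Ioi 0)) := by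
    intro k
    apply Measurable.aestronglyMeasurable
    exact (hh_meas.comp (measurable_const_mul _)).mul (by fun_prop)
  have hbi : Integrable (fun v : ℝ => M * Real.exp (-v) + |Real.log v * Real.exp (-v)|) (volume.restrict (Ioi 0)) :=
    ((integrableOn_exp_neg_Ioi 0).const_mul M).add int_log_exp.1.abs
  have hbd : ∀ k : ℕ, 1 ≤ k → ∀ᵐ v ∂(volume.restrict (Ioi (0:ℝ))), ‖hh (k * v) * Real.exp (-v)‖ ≤ M * Real.exp (-v) + |Real.log v * Real.exp (-v)| := by
    intro k hk
    rw [ae_restrict_iff' measurableSet_Ioi]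
    refine Eventually.of_forall fun v (hv : 0 < v) => ?_
    have hk' : (1:ℝ) ≤ k := by exact_mod_cast hk
    have e0 := Real.exp_pos (-v)
    rw [norm_mul, Real.norm_eq_abs, Real.norm_eq_abs, abs_mul, abs_of_pos e0, ← add_mul]
    apply mul_le_mul_of_nonneg_right _ e0.le
    by_cases h : 1 ≤ k * v
    · linarith [hM1 _ h, abs_nonneg (Real.log v)]
    · push Not at h
      refine (hM2 _ (by positivity) h).trans ?_
      have h1 : v ≤ k * v := by nlinarith
      have h2 : Real.log v ≤ Real.log (k*v) := Real.log_le_log hv h1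
      have h3 : Real.log (k*v) ≤ 0 := Real.log_nonpos (by positivity) h.le
      rw [abs_of_nonpos h3, abs_of_nonpos (h2.trans h3)]
      linarith
  refine ⟨?_, fun k hk => Integrable.mono' hbi (hmeas k) (hbd k hk)⟩
  have hBi : ∫ v in Ioi (0:ℝ), B * Real.exp (-v) = B := by
    rw [integral_const_mul, integral_exp_neg_Ioi]; simp
  rw [← hBi]
  refine tendsto_integral_filter_of_dominated_convergence _ (Eventually.of_forall hmeas) ?_ hbi ?_
  · filter_upwards [eventually_ge_atTop 1] with k hk
    exact hbd k hk
  · rw [ae_restrict_iff' measurableSet_Ioi]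
    refine Eventually.of_forall fun v (hv : 0 < v) => ?_
    apply Tendsto.mul_const
    exact (hh_tendsto hB).comp (tendsto_natCast_atTop_atTop.atTop_mul_const hv)

open MeasureTheory Set in
lemma lap_lim {B : ℝ} (hB : Tendsto (fun N : ℕ => PS gg N - Real.log (Real.log N)) atTop (𝓝 B)) :
    Tendsto (fun k : ℕ => (∑' n : ℕ, if n.Prime then gg n * (n:ℝ)^(-(1/(k:ℝ))) else 0) - Real.log k) atTop
      (𝓝 (B - Real.eulerMascheroniConstant)) := by
  obtain ⟨h1, h2⟩ := hh_lim hB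
  refine (h1.sub_const _).congr' ?_
  filter_upwards [eventually_ge_atTop 1] with k hk
  have hk' : (0:ℝ) < k := by exact_mod_cast hk
  rw [← laplace hk']
  have e : ∀ v ∈ Ioi (0:ℝ), PS gg ⌊Real.exp (k*v)⌋₊ * Real.exp (-v) =
      hh (k*v) * Real.exp (-v) + (Real.log k * Real.exp (-v) + Real.log v * Real.exp (-v)) := by
    intro v (hv : 0 < v)
    simp only [hh]
    rw [Real.log_mul hk'.ne' hv.ne']; ring
  rw [setIntegral_congr_fun measurableSet_Ioi e]
  have i1 : IntegrableOn (fun v : ℝ => Real.log k * Real.exp (-v)) (Ioi 0) := (integrableOn_exp_neg_Ioi 0).const_mul _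
  have i2 := integral_add (h2 k hk) (Integrable.add i1 int_log_exp.1)
  simp only [Pi.add_apply] at i2
  rw [i2, integral_add i1 int_log_exp.1, int_log_exp.2, integral_const_mul, integral_exp_neg_Ioi]
  simp
  ring

def powHom (s : ℝ) (hs : s ≠ 0) : ℕ →*₀ ℝ where
  toFun n := 1 / (n:ℝ)^s
  map_zero' := by simp [Real.zero_rpow hs]
  map_one' := by simp
  map_mul' a b := by
    push_cast
    rw [Real.mul_rpow (Nat.cast_nonneg a) (Nat.cast_nonneg b)]
    rw [one_div_mul_one_div]

lemma zeta_pos {s : ℝ} (hs : 1 < s) : 0 < ∑' n : ℕ, 1 / (n:ℝ)^s := by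
  have := Real.summable_one_div_nat_rpow.2 hs
  refine this.tsum_pos (fun n => by positivity) 1 (by simp)

lemma prime_rpow_le {p : ℕ} (hp : p.Prime) {s : ℝ} (hs : 1 ≤ s) :
    0 < 1 / (p:ℝ)^s ∧ 1 / (p:ℝ)^s ≤ 1 / p := by
  have h2 : (2:ℝ) ≤ p := by exact_mod_cast hp.two_le
  refine ⟨by positivity, ?_⟩
  apply one_div_le_one_div_of_le (by linarith)
  simpa using Real.rpow_le_rpow_of_exponent_le (show (1:ℝ) ≤ p by linarith) hs

lemma zeta_log {s : ℝ} (hs : 1 < s) :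
    HasSum (fun n : ℕ => if n.Prime then -Real.log (1 - 1/(n:ℝ)^s) else 0)
      (Real.log (∑' n : ℕ, 1 / (n:ℝ)^s)) := by
  have hs0 : s ≠ 0 := by linarith
  have h := EulerProduct.eulerProduct_completely_multiplicative_hasProd (f := powHom s hs0) (by
    refine (Real.summable_one_div_nat_rpow.2 hs).congr fun n => ?_
    simp [powHom]; exact (abs_of_nonneg (by positivity)).symm)
  have h2 := (Nat.Primes.hasProd_iff_hasProd_ite (f := fun n : ℕ => (1 - powHom s hs0 n)⁻¹)).1 h
  have h3 : Tendsto _ _ _ := h2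
  have h4 := (Real.continuousAt_log (zeta_pos hs).ne').tendsto.comp h3
  refine Tendsto.congr ?_ h4
  intro S
  simp only [Function.comp]
  rw [Real.log_prod]
  · apply Finset.sum_congr rfl
    intro n _
    split_ifs with hp
    · rw [Real.log_inv]; rfl
    · simp
  · intro n _
    split_ifs with hp
    · have := (prime_rpow_le hp hs.le).2.trans (prime_inv_le hp).2
      apply inv_ne_zero
      simp only [powHom]
      change 1 - 1 / (n:ℝ)^s ≠ 0
      linarith
    · simp

lemma diff_lim : Tendsto (fun k : ℕ =>
    (∑' n : ℕ, if n.Prime then gg n * (n:ℝ)^(-(1/(k:ℝ))) else 0) -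
      Real.log (∑' n : ℕ, 1 / (n:ℝ)^(1 + 1/(k:ℝ)))) atTop (𝓝 0) := by
  have hs : Summable (fun i : ℕ => 2 * (1 / (i:ℝ))^2) := by
    simpa [one_div_pow] using (Real.summable_one_div_nat_pow.2 (by norm_num : 1 < 2)).mul_left 2
  have key := tendsto_tsum_of_dominated_convergence (𝓕 := atTop)
    (f := fun (k : ℕ) (n : ℕ) => if n.Prime then gg n * (n:ℝ)^(-(1/(k:ℝ))) + Real.log (1 - 1/(n:ℝ)^(1+1/(k:ℝ))) else 0)
    (g := fun _ => (0:ℝ)) hs ?_ ?_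
  · rw [tsum_zero] at key
    refine key.congr' ?_
    filter_upwards [eventually_ge_atTop 1] with k hk
    have hk' : (0:ℝ) < k := by exact_mod_cast hk
    have hk2 : 0 < 1/(k:ℝ) := by positivity
    have z := zeta_log (s := 1 + 1/(k:ℝ)) (by linarith)
    rw [← z.tsum_eq, ← (gg_summable hk').tsum_sub z.summable]
    apply tsum_congr
    intro n
    split_ifs <;> ring
  · intro n
    by_cases hp : n.Prime
    · simp only [hp, if_true]
      have hn : (0:ℝ) < n := by exact_mod_cast hp.pos
      have i0 : Tendsto (fun k : ℕ => 1/(k:ℝ)) atTop (𝓝 0) := tendsto_one_div_atTop_nhds_zero_nat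
      have i1 : Tendsto (fun k : ℕ => (n:ℝ)^(-(1/(k:ℝ)))) atTop (𝓝 1) := by
        have := (tendsto_const_nhds (x := (n:ℝ))).rpow i0.neg (Or.inl hn.ne')
        simpa using this
      have i2 : Tendsto (fun k : ℕ => (n:ℝ)^(1+1/(k:ℝ))) atTop (𝓝 n) := by
        have := (tendsto_const_nhds (x := (n:ℝ))).rpow (i0.const_add 1) (Or.inl hn.ne')
        simpa using this
      have i3 : Tendsto (fun k : ℕ => Real.log (1 - 1/(n:ℝ)^(1+1/(k:ℝ)))) atTop (𝓝 (Real.log (1 - 1/n))) := by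
        apply Tendsto.log
        · exact ((tendsto_const_nhds (x := (1:ℝ))).div i2 hn.ne').const_sub 1
        · have := (prime_inv_le hp).2; linarith
      have := (i1.const_mul (gg n)).add i3
      simpa [gg] using this
    · simp [hp]
  · filter_upwards [eventually_ge_atTop 1] with k hk n
    have hk' : (0:ℝ) < k := by exact_mod_cast hk
    have hk2 : 0 < 1/(k:ℝ) := by positivity
    split_ifs with hp
    · have hn : (1:ℝ) ≤ n := by exact_mod_cast hp.one_le
      have a := prime_inv_le hp
      have b := prime_rpow_le hp (show 1 ≤ 1 + 1/(k:ℝ) by linarith)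
      have ea := E_bound a.1 a.2
      have eb := E_bound b.1.le (b.2.trans a.2)
      set t := (n:ℝ)^(-(1/(k:ℝ))) with ht
      have t0 : 0 < t := by positivity
      have t1 : t ≤ 1 := Real.rpow_le_one_of_one_le_of_nonpos hn (by linarith)
      have et : 1/(n:ℝ)^(1+1/(k:ℝ)) = 1/n * t := by
        rw [Real.rpow_add (by linarith), ht, Real.rpow_neg (by linarith), Real.rpow_one]
        field_simp
      set y := 1/(n:ℝ)^(1+1/(k:ℝ)) with hy
      set w := 1/(n:ℝ) with hw
      have e1 : gg n = -Real.log (1 - w) := rfl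
      have e2 : gg n * t + Real.log (1-y) = (gg n - w) * t - (-Real.log (1-y) - y) := by
        rw [et]; ring
      rw [e2, Real.norm_eq_abs, abs_le, e1]
      have c1 : (-Real.log (1 - w) - w) * t ≤ -Real.log (1 - w) - w := mul_le_of_le_one_right ea.1 t1
      have c2 : 0 ≤ (-Real.log (1 - w) - w) * t := mul_nonneg ea.1 t0.le
      have c3 : y^2 ≤ w^2 := pow_le_pow_left₀ b.1.le b.2 2
      constructor <;> linarith
    · simp

lemma zeta_lim : Tendsto (fun k : ℕ => Real.log (∑' n : ℕ, 1 / (n:ℝ)^(1 + 1/(k:ℝ))) - Real.log k) atTop (𝓝 0) := by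
  have h1 : Tendsto (fun k : ℕ => 1 + 1/(k:ℝ)) atTop (𝓝[>] 1) := by
    rw [tendsto_nhdsWithin_iff]
    constructor
    · simpa using (tendsto_one_div_atTop_nhds_zero_nat (𝕜 := ℝ)).const_add 1
    · filter_upwards [eventually_ge_atTop 1] with k hk
      have hk' : (0:ℝ) < k := by exact_mod_cast hk
      simp [hk']
  have h2 := ((tendsto_sub_mul_tsum_nat_rpow.comp h1).log one_ne_zero)
  rw [Real.log_one] at h2
  refine h2.congr' ?_
  filter_upwards [eventually_ge_atTop 1] with k hk
  have hk' : (0:ℝ) < k := by exact_mod_cast hk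
  have hk2 : 0 < 1/(k:ℝ) := by positivity
  have := zeta_pos (show 1 < 1 + 1/(k:ℝ) by linarith)
  simp only [Function.comp, add_sub_cancel_left]
  rw [Real.log_mul hk2.ne' this.ne', one_div, Real.log_inv]
  ring

lemma mertens3 : Tendsto (fun N : ℕ => PS gg N - Real.log (Real.log N)) atTop
    (𝓝 Real.eulerMascheroniConstant) := by
  obtain ⟨B, hB⟩ := mertens2'
  have h1 := lap_lim hB
  have h2 := diff_lim.add zeta_lim
  have h3 := tendsto_nhds_unique h1 (h2.congr fun k => by ring)
  have : B = Real.eulerMascheroniConstant := by linarith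
  rwa [this] at hB

/-- `log ∏_{p ≤ N}(1+1/p) - log log N → γ - log ζ(2)` -/
lemma mertens3' : Tendsto (fun N : ℕ => PS (fun n => Real.log (1 + 1/(n:ℝ))) N - Real.log (Real.log N)) atTop
    (𝓝 (Real.eulerMascheroniConstant - Real.log (∑' n : ℕ, 1 / (n:ℝ)^(2:ℝ)))) := by
  have z := zeta_log (s := 2) (by norm_num)
  have h := PS_tendsto (f := fun n => -Real.log (1 - 1/(n:ℝ)^(2:ℝ))) z.summable
  rw [z.tsum_eq] at h
  refine (mertens3.sub h).congr fun N => ?_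
  have : PS gg N = PS (fun n => Real.log (1 + 1/(n:ℝ))) N + PS (fun n => -Real.log (1 - 1/(n:ℝ)^(2:ℝ))) N := by
    rw [← PS_add]
    apply PS_congr
    intro p hp _
    have a := prime_inv_le hp
    have e : 1 - 1/(p:ℝ)^(2:ℝ) = (1 - 1/p) * (1 + 1/p) := by
      rw [Real.rpow_two]; ring
    rw [e, Real.log_mul (by linarith) (by linarith), gg]
    ring
  rw [this]; ring

def mu (d : ℕ) : ℝ := ((ArithmeticFunction.moebius d : ℤ) : ℝ)

lemma mu_abs (d : ℕ) : |mu d| ≤ 1 := by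
  unfold mu
  have := ArithmeticFunction.abs_moebius_le_one (n := d)
  exact_mod_cast this

lemma moebC : (∑' n : ℕ, 1 / (n:ℝ)^(2:ℝ)) * ∑' d : ℕ, mu d / (d:ℝ)^2 = 1 := by
  have h := ArithmeticFunction.LSeries_zeta_mul_Lseries_moebius (s := 2) (by norm_num)
  rw [ArithmeticFunction.LSeries_zeta_eq_riemannZeta (by norm_num),
    zeta_eq_tsum_one_div_nat_cpow (by norm_num)] at h
  have h1 : ∀ n : ℕ, (1 / (n:ℂ)^(2:ℂ)) = ((1 / (n:ℝ)^(2:ℝ) : ℝ) : ℂ) := by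
    intro n
    rw [show (2:ℂ) = ((2:ℕ):ℂ) by norm_num, show (2:ℝ) = ((2:ℕ):ℝ) by norm_num, Complex.cpow_natCast, Real.rpow_natCast]
    push_cast; rfl
  have h2 : ∀ n : ℕ, LSeries.term (fun n => ((ArithmeticFunction.moebius n : ℤ) : ℂ)) 2 n = ((mu n / (n:ℝ)^2 : ℝ) : ℂ) := by
    intro n
    rw [LSeries.term_def]
    split_ifs with h0
    · simp [h0]
    · rw [show (2:ℂ) = ((2:ℕ):ℂ) by norm_num, Complex.cpow_natCast]
      unfold mu; push_cast; rfl
  unfold LSeries at h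
  simp_rw [h1, h2] at h
  rw [← Complex.ofReal_tsum, ← Complex.ofReal_tsum] at h
  exact_mod_cast h

lemma sum_mu_dvd (b : ℕ) (hb : 0 < b) : ∑ d ∈ b.divisors, mu d = if b = 1 then 1 else 0 := by
  have := ArithmeticFunction.coe_mul_zeta_apply (f := ArithmeticFunction.moebius) (x := b)
  rw [ArithmeticFunction.moebius_mul_coe_zeta, ArithmeticFunction.one_apply] at this
  unfold mu
  rw [← Int.cast_sum, ← this]; split_ifs <;> simp

lemma sq_dvd_iff (a b d : ℕ) (ha : Squarefree a) (hb : 0 < b) : d^2 ∣ b^2 * a ↔ d ∣ b := by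
  constructor
  · intro h
    have ha0 : a ≠ 0 := ha.ne_zero
    have hd : d ≠ 0 := by
      rintro rfl
      simp at h; omega
    rw [← Nat.factorization_le_iff_dvd hd hb.ne']
    rw [← Nat.factorization_le_iff_dvd (by positivity) (by positivity)] at h
    intro p
    have h1 := h p
    have h2 := ha.natFactorization_le_one p
    rw [Nat.factorization_mul (by positivity) ha0] at h1
    simp at h1
    omega
  · intro h
    exact Dvd.dvd.mul_right (pow_dvd_pow_of_dvd h 2) a

lemma sqf_ind (k n : ℕ) (hn : 0 < n) (hk : n ≤ k) :
    (if Squarefree n then (1:ℝ) else 0) = ∑ d ∈ Finset.Icc 1 k, if d^2 ∣ n then mu d else 0 := by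
  obtain ⟨a, b, ha, hb, rfl, hs⟩ := Nat.sq_mul_squarefree_of_pos hn
  simp_rw [sq_dvd_iff a b _ hs hb]
  rw [← Finset.sum_filter]
  have : (Finset.Icc 1 k).filter (fun d => d ∣ b) = b.divisors := by
    ext d
    simp only [Finset.mem_filter, Finset.mem_Icc, Nat.mem_divisors]
    constructor
    · rintro ⟨_, h⟩; exact ⟨h, hb.ne'⟩
    · rintro ⟨h, _⟩
      have := Nat.le_of_dvd hb h
      have := Nat.pos_of_dvd_of_pos h hb
      refine ⟨⟨this, ?_⟩, h⟩
      nlinarith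
  rw [this, sum_mu_dvd b hb]
  congr 1
  rw [eq_iff_iff]
  constructor
  · intro h
    have := h b ⟨a, by ring⟩
    simpa using this
  · rintro rfl; simpa using hs

def SF (k : ℕ) : ℝ := ∑ n ∈ Finset.Icc 1 k, if Squarefree n then 1/(n:ℝ) else 0

def HH (k : ℕ) : ℝ := ∑ i ∈ Finset.Icc 1 k, 1/(i:ℝ)

lemma SF_eq (k : ℕ) : SF k = ∑ d ∈ Finset.Icc 1 k, mu d / (d:ℝ)^2 * HH (k / d^2) := by
  unfold SF
  have : ∀ n ∈ Finset.Icc 1 k, (if Squarefree n then 1/(n:ℝ) else 0) = ∑ d ∈ Finset.Icc 1 k, if d^2 ∣ n then mu d / n else 0 := by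
    intro n hn
    rw [Finset.mem_Icc] at hn
    have := sqf_ind k n (by omega) hn.2
    calc _ = (if Squarefree n then (1:ℝ) else 0) * (1/n) := by split_ifs <;> simp
      _ = _ := by
        rw [this, Finset.sum_mul]
        refine Finset.sum_congr rfl fun d _ => ?_
        split_ifs <;> simp [div_eq_mul_inv]
  rw [Finset.sum_congr rfl this, Finset.sum_comm]
  refine Finset.sum_congr rfl fun d hd => ?_
  rw [Finset.mem_Icc] at hd
  rw [← Finset.sum_filter, HH, Finset.mul_sum]
  have hd2 : 0 < d^2 := by have := hd.1; positivity
  symm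
  refine Finset.sum_bij (fun i _ => d^2 * i) ?_ ?_ ?_ ?_
  · intro i hi
    simp only [Finset.mem_filter, Finset.mem_Icc] at hi ⊢
    refine ⟨⟨Nat.mul_pos hd2 (by omega), ?_⟩, by simp⟩
    have := (Nat.le_div_iff_mul_le hd2).1 hi.2
    linarith
  · intro i _ j _ h
    exact Nat.eq_of_mul_eq_mul_left hd2 h
  · intro n hn
    simp only [Finset.mem_filter, Finset.mem_Icc] at hn
    obtain ⟨⟨h1, h2⟩, i, rfl⟩ := hn
    refine ⟨i, ?_, rfl⟩
    simp only [Finset.mem_Icc]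
    refine ⟨Nat.pos_of_mul_pos_left h1, ?_⟩
    rw [Nat.le_div_iff_mul_le hd2]; linarith
  · intro i hi
    push_cast
    rw [div_mul_div_comm, mul_one]

lemma HH_bound (k d : ℕ) (hk : 1 ≤ k) (hd : 1 ≤ d) : |HH (k / d^2) - Real.log k| ≤ 1 + 2 * Real.log d := by
  have hd2 : 0 < d^2 := by positivity
  have hh : HH (k/d^2) = ((harmonic ⌊(k:ℝ)/((d^2 : ℕ):ℝ)⌋₊ : ℚ) : ℝ) := by
    rw [Nat.floor_div_eq_div, harmonic_eq_sum_Icc]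
    unfold HH; push_cast; simp
  have hkr : (1:ℝ) ≤ k := by exact_mod_cast hk
  have hdr : (1:ℝ) ≤ d := by exact_mod_cast hd
  have hl : Real.log ((k:ℝ)/((d^2 : ℕ):ℝ)) = Real.log k - 2 * Real.log d := by
    push_cast
    rw [Real.log_div (by positivity) (by positivity), Real.log_pow]; push_cast; rfl
  have h0 := Real.log_nonneg hdr
  have hk0 := Real.log_nonneg hkr
  by_cases h : d^2 ≤ k
  · have h1 := log_le_harmonic_floor ((k:ℝ)/((d^2 : ℕ):ℝ)) (by positivity)
    have h2 := harmonic_floor_le_one_add_log ((k:ℝ)/((d^2 : ℕ):ℝ)) (by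
      rw [le_div_iff₀ (by positivity)]; simpa using (by exact_mod_cast h : (d:ℝ)^2 ≤ k))
    rw [← hh, hl] at h1 h2
    rw [abs_le]; constructor <;> linarith
  · have : k / d^2 = 0 := Nat.div_eq_of_lt (by omega)
    rw [this]
    have : Real.log k ≤ Real.log ((d:ℝ)^2) := Real.log_le_log (by linarith) (by
      have : k ≤ d^2 := by omega
      exact_mod_cast this)
    rw [Real.log_pow] at this; push_cast at this
    simp only [HH]
    rw [abs_le]; constructor <;> simp <;> linarith

lemma summable_mu : Summable (fun d : ℕ => mu d / (d:ℝ)^2) := by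
  refine Summable.of_norm_bounded (g := fun d : ℕ => 1 / (d:ℝ)^2) (Real.summable_one_div_nat_pow.2 (by norm_num)) fun d => ?_
  rw [norm_div, Real.norm_eq_abs, Real.norm_of_nonneg (by positivity)]
  gcongr; exact mu_abs d

lemma SF_bound : ∃ K, ∀ k : ℕ, 1 ≤ k → |SF k - (∑' n : ℕ, 1 / (n:ℝ)^(2:ℝ))⁻¹ * Real.log k| ≤ K := by
  have hg : Summable (fun d : ℕ => 1/(d:ℝ)^2 * (1 + 2 * Real.log d)) := by
    have h1 : Summable (fun d : ℕ => 1 / (d:ℝ)^2) := Real.summable_one_div_nat_pow.2 (by norm_num)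
    refine (h1.add (summable_logp.mul_left (1/2))).congr fun d => ?_
    ring
  refine ⟨∑' d : ℕ, 1/(d:ℝ)^2 * (1 + 2 * Real.log d), fun k hk => ?_⟩
  have hC : (∑' n : ℕ, 1 / (n:ℝ)^(2:ℝ))⁻¹ = ∑' d : ℕ, mu d / (d:ℝ)^2 := by
    rw [inv_eq_iff_eq_inv]; exact eq_inv_of_mul_eq_one_left moebC
  rw [hC]
  have hfin : ∀ d ∉ Finset.Icc 1 k, mu d / (d:ℝ)^2 * HH (k / d^2) = 0 := by
    intro d hd
    rw [Finset.mem_Icc] at hd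
    rcases Nat.eq_zero_or_pos d with rfl | h
    · simp
    · have : k < d := by omega
      have : k / d^2 = 0 := Nat.div_eq_of_lt (by nlinarith)
      rw [this]; simp [HH]
  have h1 : SF k = ∑' d : ℕ, mu d / (d:ℝ)^2 * HH (k / d^2) := by
    rw [tsum_eq_sum hfin, SF_eq]
  have hs1 : Summable (fun d : ℕ => mu d / (d:ℝ)^2 * HH (k / d^2)) := summable_of_ne_finset_zero hfin
  rw [h1, ← tsum_mul_right, ← hs1.tsum_sub (summable_mu.mul_right _), ← Real.norm_eq_abs]
  refine tsum_of_norm_bounded hg.hasSum fun d => ?_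
  rw [← mul_sub, norm_mul, norm_div, Real.norm_eq_abs, Real.norm_eq_abs, Real.norm_eq_abs]
  rcases Nat.eq_zero_or_pos d with rfl | h
  · simp
  rw [abs_of_nonneg (by positivity : (0:ℝ) ≤ (d:ℝ)^2)]
  exact mul_le_mul (by gcongr; exact mu_abs d) (HH_bound k d hk h) (abs_nonneg _) (by positivity)

open Classical in
def TT (x : ℕ) : ℝ := ∑ n ∈ (Finset.Icc 1 (x^2)).filter (fun n => Squarefree n ∧ ∀ p : ℕ, p.Prime → p ∣ n → p ≤ x), 1/(n:ℝ)

lemma lt_of_le_div {x p k : ℕ} (hp : x < p) (hk : k ≤ x^2/p) : k < p := by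
  have h := (Nat.le_div_iff_mul_le (by omega)).1 hk
  by_contra hc
  push Not at hc
  have : p * p ≤ k * p := Nat.mul_le_mul_right p hc
  nlinarith

open Classical in
lemma TT_eq (x : ℕ) : TT x = SF (x^2) - ∑ p ∈ (Finset.Ioc x (x^2)).filter Nat.Prime, 1/(p:ℝ) * SF (x^2/p) := by
  have h1 : SF (x^2) = ∑ n ∈ (Finset.Icc 1 (x^2)).filter Squarefree, 1/(n:ℝ) := by
    unfold SF; rw [Finset.sum_filter]
  have h2 : ∑ n ∈ (Finset.Icc 1 (x^2)).filter Squarefree, 1/(n:ℝ)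
      = TT x + ∑ n ∈ (Finset.Icc 1 (x^2)).filter (fun n => Squarefree n ∧ ¬ ∀ p : ℕ, p.Prime → p ∣ n → p ≤ x), 1/(n:ℝ) := by
    unfold TT
    rw [← Finset.sum_filter_add_sum_filter_not _ (fun n : ℕ => ∀ p : ℕ, p.Prime → p ∣ n → p ≤ x)]
    rw [Finset.filter_filter, Finset.filter_filter]
  have h3 : ∑ p ∈ (Finset.Ioc x (x^2)).filter Nat.Prime, 1/(p:ℝ) * SF (x^2/p)
      = ∑ n ∈ (Finset.Icc 1 (x^2)).filter (fun n => Squarefree n ∧ ¬ ∀ p : ℕ, p.Prime → p ∣ n → p ≤ x), 1/(n:ℝ) := by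
    have : ∀ p ∈ (Finset.Ioc x (x^2)).filter Nat.Prime, 1/(p:ℝ) * SF (x^2/p) =
        ∑ k ∈ (Finset.Icc 1 (x^2/p)).filter Squarefree, 1/(p:ℝ) * (1/(k:ℝ)) := by
      intro p _
      unfold SF; rw [← Finset.sum_filter, Finset.mul_sum]
    rw [Finset.sum_congr rfl this, Finset.sum_sigma']
    refine Finset.sum_bij (fun a _ => a.1 * a.2) ?_ ?_ ?_ ?_
    · rintro ⟨p, k⟩ h
      simp only [Finset.mem_sigma, Finset.mem_filter, Finset.mem_Ioc, Finset.mem_Icc] at h ⊢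
      obtain ⟨⟨⟨hxp, hpx⟩, hp⟩, ⟨hk1, hk⟩, hsk⟩ := h
      have hlt := lt_of_le_div hxp hk
      have hm := (Nat.le_div_iff_mul_le (by omega)).1 hk
      refine ⟨⟨Nat.mul_pos hp.pos hk1, by linarith⟩, ?_, ?_⟩
      · rw [Nat.squarefree_mul_iff]
        exact ⟨Nat.coprime_of_lt_prime (by omega) hlt hp, hp.prime.squarefree, hsk⟩
      · push Not
        exact ⟨p, hp, by simp, hxp⟩
    · rintro ⟨p, k⟩ h ⟨q, l⟩ h' he
      simp only [Finset.mem_sigma, Finset.mem_filter, Finset.mem_Ioc, Finset.mem_Icc] at h h' he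
      obtain ⟨⟨⟨hxp, hpx⟩, hp⟩, ⟨hk1, hk⟩, hsk⟩ := h
      obtain ⟨⟨⟨hxq, hqx⟩, hq⟩, ⟨hl1, hl⟩, hsl⟩ := h'
      have hlt := lt_of_le_div hxp hk
      have hlt' := lt_of_le_div hxq hl
      have hpq : p = q := by
        by_contra hne
        have h1 : p ∣ l := by
          have : p ∣ q * l := ⟨k, he.symm⟩
          rcases hp.dvd_mul.1 this with h | h
          · exact absurd ((Nat.prime_dvd_prime_iff_eq hp hq).1 h) hne
          · exact h
        have h2 : q ∣ k := by
          have : q ∣ p * k := ⟨l, he⟩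
          rcases hq.dvd_mul.1 this with h | h
          · exact absurd ((Nat.prime_dvd_prime_iff_eq hq hp).1 h).symm hne
          · exact h
        have := Nat.le_of_dvd hl1 h1
        have := Nat.le_of_dvd hk1 h2
        omega
      subst hpq
      have := Nat.eq_of_mul_eq_mul_left hp.pos he
      subst this; rfl
    · intro n hn
      simp only [Finset.mem_filter, Finset.mem_Icc] at hn
      obtain ⟨⟨hn1, hnx⟩, hs, hb⟩ := hn
      push Not at hb
      obtain ⟨p, hp, ⟨k, rfl⟩, hxp⟩ := hb
      have hk0 : 0 < k := Nat.pos_of_mul_pos_left hn1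
      refine ⟨⟨p, k⟩, ?_, rfl⟩
      simp only [Finset.mem_sigma, Finset.mem_filter, Finset.mem_Ioc, Finset.mem_Icc]
      refine ⟨⟨⟨hxp, by nlinarith⟩, hp⟩, ⟨hk0, ?_⟩, hs.of_mul_right⟩
      rw [Nat.le_div_iff_mul_le hp.pos]; linarith
    · rintro ⟨p, k⟩ h
      push_cast
      rw [div_mul_div_comm, mul_one]
  rw [h1, h2, h3]; ring

lemma nthPrime_prime (j : ℕ) : (nthPrime j).Prime := Nat.prime_nth_prime j

lemma nthPrime_strictMono : StrictMono nthPrime := Nat.nth_strictMono Nat.infinite_setOfPred_prime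

lemma exists_index {m q : ℕ} (hm : 1 ≤ m) (hq : q.Prime) (hle : q ≤ nthPrime (m-1)) : ∃ j, j < m ∧ nthPrime j = q := by
  have h : nthPrime (Nat.count Nat.Prime q) = q := Nat.nth_count hq
  refine ⟨_, ?_, h⟩
  rw [← h] at hle
  have := nthPrime_strictMono.le_iff_le.1 hle
  omega

lemma nthPrime_le {m j : ℕ} (hj : j < m) : nthPrime j ≤ nthPrime (m-1) :=
  nthPrime_strictMono.monotone (by omega)

lemma dvd_elt {m q : ℕ} (hq : q.Prime) (ν : Fin m → Bool) : q ∣ elt m ν ↔ ∃ j : Fin m, ν j = true ∧ q = nthPrime j := by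
  unfold elt
  rw [hq.prime.dvd_finsetProd_iff]
  constructor
  · rintro ⟨j, _, h⟩
    refine ⟨j, ?_⟩
    split_ifs at h with hj
    · exact ⟨hj, (Nat.prime_dvd_prime_iff_eq hq (nthPrime_prime _)).1 h⟩
    · simp at h; exact absurd h hq.ne_one
  · rintro ⟨j, hj, rfl⟩
    exact ⟨j, Finset.mem_univ _, by simp [hj]⟩

lemma elt_eq {m : ℕ} (ν : Fin m → Bool) : elt m ν = ∏ j ∈ Finset.univ.filter (fun j => ν j = true), nthPrime j := by
  unfold elt; rw [Finset.prod_filter]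

lemma elt_sqf {m : ℕ} (ν : Fin m → Bool) : Squarefree (elt m ν) := by
  rw [elt_eq]
  refine Finset.squarefree_prod_of_pairwise_isCoprime ?_ fun j _ => (nthPrime_prime j).prime.squarefree
  intro i _ j _ hij
  show IsRelPrime _ _
  rw [← Nat.coprime_iff_isRelPrime]
  refine (Nat.coprime_primes (nthPrime_prime _) (nthPrime_prime _)).2 fun h => hij ?_
  exact Fin.ext (nthPrime_strictMono.injective h)

lemma elt_pos {m : ℕ} (ν : Fin m → Bool) : 0 < elt m ν := Nat.pos_of_ne_zero (elt_sqf ν).ne_zero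

lemma elt_inv {m n : ℕ} (hm : 1 ≤ m) (hs : Squarefree n) (h : ∀ p : ℕ, p.Prime → p ∣ n → p ≤ nthPrime (m-1)) :
    elt m (fun j => decide (nthPrime j ∣ n)) = n := by
  rw [elt_eq]
  conv_rhs => rw [← Nat.prod_primeFactors_of_squarefree hs]
  refine Finset.prod_bij (fun j _ => nthPrime j) ?_ ?_ ?_ ?_
  · intro j hj
    simp only [Finset.mem_filter, Finset.mem_univ, true_and, decide_eq_true_eq] at hj
    exact Nat.mem_primeFactors.2 ⟨nthPrime_prime j, hj, hs.ne_zero⟩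
  · intro i _ j _ hij
    exact Fin.ext (nthPrime_strictMono.injective hij)
  · intro q hq
    obtain ⟨hq, hd, _⟩ := Nat.mem_primeFactors.1 hq
    obtain ⟨j, hj, rfl⟩ := exists_index hm hq (h q hq hd)
    exact ⟨⟨j, hj⟩, by simpa using hd, rfl⟩
  · intro j _; rfl

open Classical in
lemma sum_elt (m : ℕ) (hm : 1 ≤ m) :
    ∑ ν ∈ Finset.univ.filter (fun ν : Fin m → Bool => (elt m ν : ℝ) ≤ (nthPrime (m - 1) : ℝ) ^ 2), 1 / (elt m ν : ℝ)
      = TT (nthPrime (m-1)) := by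
  unfold TT
  refine Finset.sum_bij' (fun ν _ => elt m ν) (fun n _ => fun j => decide (nthPrime j ∣ n)) ?_ ?_ ?_ ?_ ?_
  · intro ν hν
    simp only [Finset.mem_filter, Finset.mem_univ, true_and, Finset.mem_Icc] at hν ⊢
    refine ⟨⟨elt_pos ν, by exact_mod_cast hν⟩, elt_sqf ν, ?_⟩
    intro p hp h
    obtain ⟨j, _, rfl⟩ := (dvd_elt hp ν).1 h
    exact nthPrime_le j.2
  · intro n hn
    simp only [Finset.mem_filter, Finset.mem_univ, true_and, Finset.mem_Icc] at hn ⊢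
    rw [elt_inv hm hn.2.1 hn.2.2]
    exact_mod_cast hn.1.2
  · intro ν _
    funext j
    have := dvd_elt (nthPrime_prime j) ν
    by_cases hj : ν j = true
    · rw [hj, decide_eq_true_eq, this]
      exact ⟨j, hj, rfl⟩
    · have hj' : ν j = false := by simpa using hj
      rw [hj', decide_eq_false_iff_not, this]
      rintro ⟨i, hi, he⟩
      have : j = i := Fin.ext (nthPrime_strictMono.injective he)
      subst this; exact hj hi
  · intro n hn
    simp only [Finset.mem_filter, Finset.mem_Icc] at hn
    exact elt_inv hm hn.2.1 hn.2.2
  · intro ν _; rfl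

lemma Zm_eq (m : ℕ) (hm : 1 ≤ m) : Zm m = Real.exp (PS (fun n => Real.log (1 + 1/(n:ℝ))) (nthPrime (m-1))) := by
  unfold PS Zm
  rw [← Finset.sum_filter, Real.exp_sum]
  refine Finset.prod_bij (fun j _ => nthPrime j) ?_ ?_ ?_ ?_
  · intro j hj
    simp only [Finset.mem_filter, Finset.mem_range] at hj ⊢
    exact ⟨by have := nthPrime_le hj; omega, nthPrime_prime j⟩
  · intro i _ j _ h
    exact nthPrime_strictMono.injective h
  · intro q hq
    simp only [Finset.mem_filter, Finset.mem_range] at hq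
    obtain ⟨j, hj, h⟩ := exists_index hm hq.2 (by omega)
    exact ⟨j, by simpa using hj, h⟩
  · intro j _
    rw [Real.exp_log (by positivity)]

lemma PS_diff (f : ℕ → ℝ) (x : ℕ) : ∑ p ∈ (Finset.Ioc x (x^2)).filter Nat.Prime, f p = PS f (x^2) - PS f x := by
  have hx : x ≤ x^2 := by nlinarith [Nat.zero_le x, sq_nonneg ((x:ℤ)), Nat.le_self_pow (n := 2) (by norm_num) x]
  rw [Finset.sum_filter]
  unfold PS
  rw [eq_sub_iff_add_eq', ← Finset.sum_sdiff (Finset.range_subset_range.2 (Nat.succ_le_succ hx)), add_comm]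
  congr 1
  refine Finset.sum_congr ?_ fun _ _ => rfl
  ext n; simp; omega

lemma log_natdiv {N p : ℕ} (hp : 0 < p) (h : p ≤ N) : |Real.log (N / p : ℕ) - (Real.log N - Real.log p)| ≤ Real.log 2 := by
  set q := N / p with hq
  have hq1 : 1 ≤ q := Nat.div_pos h hp
  have h1 : q * p ≤ N := Nat.div_mul_le_self N p
  have h2 : N ≤ 2 * (q * p) := by
    have : N < (q+1) * p := Nat.lt_mul_of_div_lt (by omega) hp
    nlinarith
  have hqr : (0:ℝ) < q := by exact_mod_cast hq1
  have hpr : (0:ℝ) < p := by exact_mod_cast hp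
  have hN : (0:ℝ) < N := by exact_mod_cast (lt_of_lt_of_le hp h)
  have e1 : Real.log q + Real.log p ≤ Real.log N := by
    rw [← Real.log_mul hqr.ne' hpr.ne']
    exact Real.log_le_log (by positivity) (by exact_mod_cast h1)
  have e2 : Real.log N ≤ Real.log 2 + (Real.log q + Real.log p) := by
    rw [← Real.log_mul hqr.ne' hpr.ne', ← Real.log_mul (by norm_num) (by positivity)]
    exact Real.log_le_log hN (by exact_mod_cast h2)
  have := Real.log_nonneg (show (1:ℝ) ≤ 2 by norm_num)
  rw [abs_le]; constructor <;> linarith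

lemma deltaA : Tendsto (fun x : ℕ => PS (fun n => 1 / (n:ℝ)) (x^2) - PS (fun n => 1 / (n:ℝ)) x) atTop (𝓝 (Real.log 2)) := by
  obtain ⟨B, hB⟩ := mertens2
  have hsq : Tendsto (fun x : ℕ => x^2) atTop atTop := tendsto_pow_atTop (by norm_num)
  have h := ((hB.comp hsq).sub hB).add_const (Real.log 2)
  rw [sub_self, zero_add] at h
  refine h.congr' ?_
  filter_upwards [eventually_ge_atTop 2] with x hx
  have hl : 0 < Real.log x := Real.log_pos (by exact_mod_cast hx)
  simp only [Function.comp]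
  push_cast
  rw [Real.log_pow, Nat.cast_ofNat, Real.log_mul (by norm_num) hl.ne']
  ring

lemma TT_approx : ∃ K, ∀ x : ℕ, 2 ≤ x → |TT x - (∑' n : ℕ, 1 / (n:ℝ)^(2:ℝ))⁻¹ * (3 * Real.log x - 2 * Real.log x * (PS (fun n => 1 / (n:ℝ)) (x^2) - PS (fun n => 1 / (n:ℝ)) x))|
    ≤ K + K * (PS (fun n => 1 / (n:ℝ)) (x^2) - PS (fun n => 1 / (n:ℝ)) x) := by
  obtain ⟨K0, hK0⟩ := SF_bound
  obtain ⟨K1, hK1⟩ := mertens1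
  set C := (∑' n : ℕ, 1 / (n:ℝ)^(2:ℝ))⁻¹ with hC
  have hCpos : 0 < C := inv_pos.2 (zeta_pos (by norm_num))
  have hl2 := Real.log_pos (show (1:ℝ) < 2 by norm_num)
  have hK00 : 0 ≤ K0 := (abs_nonneg _).trans (hK0 1 le_rfl)
  have hK10 : 0 ≤ K1 := (abs_nonneg _).trans (hK1 1 le_rfl)
  refine ⟨K0 + C * Real.log 2 + C * (2 * K1), fun x hx => ?_⟩
  have hx2 : 1 ≤ x^2 := Nat.one_le_pow _ _ (by omega)
  have hlx : Real.log ((x^2 : ℕ):ℝ) = 2 * Real.log x := by push_cast; rw [Real.log_pow]; norm_num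
  have hA := PS_diff (fun n => 1 / (n:ℝ)) x
  have hL := PS_diff (fun n => Real.log n / n) x
  set DA := PS (fun n => 1 / (n:ℝ)) (x^2) - PS (fun n => 1 / (n:ℝ)) x with hDA
  set DL := PS (fun n => Real.log n / n) (x^2) - PS (fun n => Real.log n / n) x with hDL
  have hDA0 : 0 ≤ DA := by rw [← hA]; exact Finset.sum_nonneg fun _ _ => by positivity
  have h1 := hK0 (x^2) hx2
  rw [hlx] at h1
  have h2 : |∑ p ∈ (Finset.Ioc x (x^2)).filter Nat.Prime, 1/(p:ℝ) * SF (x^2/p) - C * (2 * Real.log x * DA - DL)| ≤ (K0 + C * Real.log 2) * DA := by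
    have : C * (2 * Real.log x * DA - DL) = ∑ p ∈ (Finset.Ioc x (x^2)).filter Nat.Prime, 1/(p:ℝ) * (C * (2 * Real.log x - Real.log p)) := by
      rw [← hA, ← hL, Finset.mul_sum, ← Finset.sum_sub_distrib, Finset.mul_sum]
      refine Finset.sum_congr rfl fun p _ => ?_
      ring
    rw [this, ← Finset.sum_sub_distrib, ← hA, Finset.mul_sum]
    refine (Finset.abs_sum_le_sum_abs _ _).trans (Finset.sum_le_sum fun p hp => ?_)
    simp only [Finset.mem_filter, Finset.mem_Ioc] at hp
    rw [← mul_sub, abs_mul, abs_of_nonneg (by positivity : (0:ℝ) ≤ 1/(p:ℝ)), mul_comm]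
    refine mul_le_mul_of_nonneg_right ?_ (by positivity)
    have e1 := hK0 (x^2/p) (Nat.div_pos hp.1.2 hp.2.pos)
    have e2 := log_natdiv hp.2.pos hp.1.2
    rw [hlx] at e2
    have e3 : |C * (Real.log (x^2/p : ℕ) - (2 * Real.log x - Real.log p))| ≤ C * Real.log 2 := by
      rw [abs_mul, abs_of_pos hCpos]; exact mul_le_mul_of_nonneg_left e2 hCpos.le
    calc _ = |(SF (x^2/p) - C * Real.log (x^2/p : ℕ)) + C * (Real.log (x^2/p : ℕ) - (2 * Real.log x - Real.log p))| := by
            congr 1; ring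
      _ ≤ _ := (abs_add_le _ _).trans (add_le_add e1 e3)
  have h3 : |C * (DL - Real.log x)| ≤ C * (2 * K1) := by
    rw [abs_mul, abs_of_pos hCpos]
    refine mul_le_mul_of_nonneg_left ?_ hCpos.le
    have a := hK1 (x^2) hx2
    have b := hK1 x (by omega)
    rw [hlx] at a
    rw [abs_le] at a b ⊢
    constructor <;> linarith [a.1, a.2, b.1, b.2]
  rw [TT_eq]
  have hp1 : 0 ≤ C * Real.log 2 := by positivity
  have hp2 : 0 ≤ C * (2 * K1) := by positivity
  have hp3 : 0 ≤ C * (2 * K1) * DA := by positivity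
  rw [abs_le] at h1 h2 h3 ⊢
  constructor <;> nlinarith [h1.1, h1.2, h2.1, h2.2, h3.1, h3.2]

lemma log_nat_atTop : Tendsto (fun x : ℕ => Real.log x) atTop atTop :=
  Real.tendsto_log_atTop.comp tendsto_natCast_atTop_atTop

lemma TT_lim : Tendsto (fun x : ℕ => TT x / Real.log x) atTop (𝓝 ((∑' n : ℕ, 1 / (n:ℝ)^(2:ℝ))⁻¹ * (3 - 2 * Real.log 2))) := by
  obtain ⟨K, hK⟩ := TT_approx
  set C := (∑' n : ℕ, 1 / (n:ℝ)^(2:ℝ))⁻¹ with hC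
  have hm : Tendsto (fun x : ℕ => C * (3 - 2 * (PS (fun n => 1 / (n:ℝ)) (x^2) - PS (fun n => 1 / (n:ℝ)) x))) atTop (𝓝 (C * (3 - 2 * Real.log 2))) :=
    ((deltaA.const_mul 2).const_sub 3).const_mul C
  have he : Tendsto (fun x : ℕ => (K + K * (PS (fun n => 1 / (n:ℝ)) (x^2) - PS (fun n => 1 / (n:ℝ)) x)) / Real.log x) atTop (𝓝 0) :=
    ((deltaA.const_mul K).const_add K).div_atTop log_nat_atTop
  have hd : Tendsto (fun x : ℕ => TT x / Real.log x - C * (3 - 2 * (PS (fun n => 1 / (n:ℝ)) (x^2) - PS (fun n => 1 / (n:ℝ)) x))) atTop (𝓝 0) := by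
    refine squeeze_zero_norm' ?_ he
    filter_upwards [eventually_ge_atTop 2] with x hx
    have hl : 0 < Real.log x := Real.log_pos (by exact_mod_cast hx)
    rw [Real.norm_eq_abs, le_div_iff₀ hl]
    refine le_trans (le_of_eq ?_) (hK x hx)
    nth_rewrite 2 [← abs_of_pos hl]
    rw [← abs_mul]
    congr 1
    field_simp
  have := hd.add hm
  rw [zero_add] at this
  refine this.congr fun x => ?_
  ring

lemma Z_lim : Tendsto (fun x : ℕ => Real.exp (PS (fun n => Real.log (1 + 1/(n:ℝ))) x) / Real.log x) atTop
    (𝓝 (Real.exp Real.eulerMascheroniConstant * (∑' n : ℕ, 1 / (n:ℝ)^(2:ℝ))⁻¹)) := by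
  have h := (Real.continuous_exp.tendsto _).comp mertens3'
  rw [Real.exp_sub, Real.exp_log (zeta_pos (by norm_num)), div_eq_mul_inv] at h
  refine h.congr' ?_
  filter_upwards [eventually_ge_atTop 2] with x hx
  have hl : 0 < Real.log x := Real.log_pos (by exact_mod_cast hx)
  simp only [Function.comp]
  rw [Real.exp_sub, Real.exp_log hl]

/-- `Π_m{ n ≤ p_m² } → e^{-γ}(3 - ln 4) ≈ 0.90603` as `m → ∞`. -/
theorem mass_below_pm_squared :
    Tendsto (fun m : ℕ =>
        ∑ ν ∈ Finset.univ.filter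
            (fun ν : Fin m → Bool => (elt m ν : ℝ) ≤ (nthPrime (m - 1) : ℝ) ^ 2),
          mass m ν)
      atTop (𝓝 (Real.exp (-Real.eulerMascheroniConstant) * (3 - Real.log 4))) := by
  have hz : (0:ℝ) < ∑' n : ℕ, 1 / (n:ℝ)^(2:ℝ) := zeta_pos (by norm_num)
  have h := TT_lim.div Z_lim (by positivity)
  have hlim : (∑' n : ℕ, 1 / (n:ℝ)^(2:ℝ))⁻¹ * (3 - 2 * Real.log 2) / (Real.exp Real.eulerMascheroniConstant * (∑' n : ℕ, 1 / (n:ℝ)^(2:ℝ))⁻¹)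
      = Real.exp (-Real.eulerMascheroniConstant) * (3 - Real.log 4) := by
    rw [show (4:ℝ) = 2^2 by norm_num, Real.log_pow, Real.exp_neg]
    have := Real.exp_pos Real.eulerMascheroniConstant
    push_cast
    field_simp
  rw [hlim] at h
  have hx : Tendsto (fun m : ℕ => nthPrime (m-1)) atTop atTop :=
    nthPrime_strictMono.tendsto_atTop.comp (tendsto_sub_atTop_nat 1)
  refine (h.comp hx).congr' ?_
  filter_upwards [eventually_ge_atTop 1] with m hm
  have hp := (nthPrime_prime (m-1)).one_lt
  have hl : 0 < Real.log (nthPrime (m-1)) := Real.log_pos (by exact_mod_cast hp)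
  simp only [Function.comp, Pi.div_apply]
  rw [← sum_elt m hm, ← Zm_eq m hm, div_div_div_cancel_right₀ hl.ne', Finset.sum_div]
  refine Finset.sum_congr rfl fun ν _ => ?_
  unfold mass
  rw [div_div, mul_comm]

end
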